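/- (Linear accuracy bound.) Let A, Y, W be random variables on a finite probability space with values in finite sets, with A taking values in a finite set 𝒜 with |𝒜| ≥ 2. Let g be a function from the value set of Y into 𝒜, set Acc = 1 − P(g(Y) ≠ A), β = H(A | W) and C = H(Y | W). Then Acc ≤ min{ 1, 1 − (β − C − 1) / log₂ |𝒜| }. -/

import Mathlib

open scoped Classical
open Finset

namespace InfoQA

variable {Ω : Type*} [Fintype Ω]

/-- Probability of an event under a pmf `p` on a finite sample space. -/
noncomputable def pr (p : Ω → ℝ) (S : Ω → Prop) : ℝ :=
  ∑ ω, if S ω then p ω else 0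

/-- Distribution of a random variable `X` under `p`. -/
noncomputable def distOf (p : Ω → ℝ) {α : Type*} (X : Ω → α) (a : α) : ℝ :=
  pr p (fun ω => X ω = a)

/-- Shannon entropy of a random variable (logarithm base 2). -/
noncomputable def H (p : Ω → ℝ) {α : Type*} [Fintype α] (X : Ω → α) : ℝ :=
  -∑ a, distOf p X a * Real.logb 2 (distOf p X a)

/-- Conditional entropy `H(X | Z) = H(X, Z) - H(Z)` (base 2). -/
noncomputable def condH (p : Ω → ℝ) {α β : Type*} [Fintype α] [Fintype β]
    (X : Ω → α) (Z : Ω → β) : ℝ :=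
  H p (fun ω => (X ω, Z ω)) - H p Z

/-- Conditional mutual information `I(X ; Y | Z) = H(X | Z) - H(X | (Y, Z))` (base 2). -/
noncomputable def condMI (p : Ω → ℝ) {α β γ : Type*} [Fintype α] [Fintype β] [Fintype γ]
    (X : Ω → α) (Y : Ω → β) (Z : Ω → γ) : ℝ :=
  condH p X Z - condH p X (fun ω => (Y ω, Z ω))

/-- Binary entropy function (base 2); `Real.logb 2 0 = 0`, so `binEnt 0 = binEnt 1 = 0`. -/
noncomputable def binEnt (x : ℝ) : ℝ :=
  -(x * Real.logb 2 x) - (1 - x) * Real.logb 2 (1 - x)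

end InfoQA

open InfoQA

/-!
Fano's inequality is Gibbs' inequality for the law of `(A, Z)` against the model in which, given
`Z = z`, the value `g z` has mass `1 - e` and the other values share the error probability `e`
equally. Applied to `Z = (Y, W)`, with binary entropy at most one bit, it gives
`H(A | Y, W) ≤ 1 + e log₂ |𝒜|`, while the chain rule gives `H(A | W) ≤ H(Y | W) + H(A | Y, W)`.
-/

theorem mul_log_le_mul_log_add_sub {x y : ℝ} (hx : 0 ≤ x) (hy : 0 ≤ y) (hyx : y = 0 → x = 0) :
    x * Real.log y ≤ x * Real.log x + (y - x) := by
  rcases hx.eq_or_lt with rfl | hx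
  · simpa using hy
  have hy : 0 < y := hy.lt_of_ne' fun h => hx.ne' (hyx h)
  have hlog : Real.log y - Real.log x ≤ y / x - 1 := by
    rw [← Real.log_div hy.ne' hx.ne']
    exact Real.log_le_sub_one_of_pos (div_pos hy hx)
  calc x * Real.log y = x * Real.log x + x * (Real.log y - Real.log x) := by ring
    _ ≤ x * Real.log x + x * (y / x - 1) := by gcongr
    _ = x * Real.log x + (y - x) := by field_simp

theorem sum_mul_logb_le_sum_mul_logb {ι : Type*} {b : ℝ} (hb : 1 < b) (s : Finset ι) {u v : ι → ℝ}
    (hu : ∀ i ∈ s, 0 ≤ u i) (hv : ∀ i ∈ s, 0 ≤ v i) (hvu : ∀ i ∈ s, v i = 0 → u i = 0)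
    (hsum : ∑ i ∈ s, v i ≤ ∑ i ∈ s, u i) :
    ∑ i ∈ s, u i * Real.logb b (v i) ≤ ∑ i ∈ s, u i * Real.logb b (u i) := by
  have hlog : ∑ i ∈ s, u i * Real.log (v i) ≤ ∑ i ∈ s, u i * Real.log (u i) :=
    calc ∑ i ∈ s, u i * Real.log (v i)
        ≤ ∑ i ∈ s, (u i * Real.log (u i) + (v i - u i)) :=
          Finset.sum_le_sum fun i hi => mul_log_le_mul_log_add_sub (hu i hi) (hv i hi) (hvu i hi)
      _ ≤ ∑ i ∈ s, u i * Real.log (u i) := by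
          rw [Finset.sum_add_distrib, Finset.sum_sub_distrib]
          linarith
  simp only [Real.logb, ← mul_div_assoc, ← Finset.sum_div]
  exact div_le_div_of_nonneg_right hlog (Real.log_pos hb).le

namespace InfoQA

theorem binEnt_eq_binEntropy_div (x : ℝ) : binEnt x = Real.binEntropy x / Real.log 2 := by
  rw [binEnt, Real.binEntropy, Real.log_inv, Real.log_inv, Real.logb, Real.logb]
  ring

theorem binEnt_le_one (x : ℝ) : binEnt x ≤ 1 := by
  rw [binEnt_eq_binEntropy_div]
  exact div_le_one_of_le₀ Real.binEntropy_le_log_two (Real.log_nonneg one_le_two)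

variable {Ω α β γ : Type*} [Fintype Ω] {p : Ω → ℝ}

section Probability

theorem pr_nonneg (hp : ∀ ω, 0 ≤ p ω) (S : Ω → Prop) : 0 ≤ pr p S :=
  Finset.sum_nonneg fun ω _ => ite_nonneg (hp ω) le_rfl

theorem pr_mono (hp : ∀ ω, 0 ≤ p ω) {S T : Ω → Prop} (hST : ∀ ω, S ω → T ω) : pr p S ≤ pr p T := by
  simp only [pr, ← Finset.sum_filter]
  exact Finset.sum_le_sum_of_subset_of_nonneg (Finset.monotone_filter_right _ fun ω _ => hST ω)
    fun ω _ _ => hp ω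

theorem le_pr (hp : ∀ ω, 0 ≤ p ω) {S : Ω → Prop} {ω : Ω} (hω : S ω) : p ω ≤ pr p S :=
  calc p ω = if S ω then p ω else 0 := (if_pos hω).symm
    _ ≤ pr p S := Finset.single_le_sum (f := fun ω => if S ω then p ω else 0)
      (fun ω _ => ite_nonneg (hp ω) le_rfl) (Finset.mem_univ ω)

theorem eq_zero_of_pr_eq_zero (hp : ∀ ω, 0 ≤ p ω) {S : Ω → Prop} (hS : pr p S = 0) {ω : Ω}
    (hω : S ω) : p ω = 0 :=
  le_antisymm (hS ▸ le_pr hp hω) (hp ω)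

theorem sum_mul_ite (p : Ω → ℝ) (S : Ω → Prop) (u v : ℝ) :
    ∑ ω, p ω * (if S ω then u else v) = pr p S * u + pr p (fun ω => ¬S ω) * v := by
  simp only [pr, Finset.sum_mul, ← Finset.sum_add_distrib]
  refine Finset.sum_congr rfl fun ω _ => ?_
  by_cases hω : S ω <;> simp [hω]

theorem pr_add_pr_not (p : Ω → ℝ) (S : Ω → Prop) :
    pr p S + pr p (fun ω => ¬S ω) = ∑ ω, p ω := by
  simpa using (sum_mul_ite p S 1 1).symm

theorem distOf_nonneg (hp : ∀ ω, 0 ≤ p ω) (X : Ω → α) (a : α) : 0 ≤ distOf p X a :=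
  pr_nonneg hp _

theorem distOf_le_distOf_comp (hp : ∀ ω, 0 ≤ p ω) (X : Ω → α) (f : α → β) (a : α) :
    distOf p X a ≤ distOf p (fun ω => f (X ω)) (f a) :=
  pr_mono hp fun _ => congrArg f

theorem sum_distOf_mul [Fintype α] (p : Ω → ℝ) (X : Ω → α) (f : α → ℝ) :
    ∑ a, distOf p X a * f a = ∑ ω, p ω * f (X ω) := by
  simp only [distOf, pr, Finset.sum_mul, ite_mul, zero_mul]
  rw [Finset.sum_comm]
  simp only [Finset.sum_ite_eq, Finset.mem_univ, if_true]

theorem sum_distOf [Fintype α] (p : Ω → ℝ) (X : Ω → α) : ∑ a, distOf p X a = ∑ ω, p ω := by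
  simpa using sum_distOf_mul p X fun _ => 1

end Probability

section Entropy

theorem H_eq_neg_sum [Fintype α] (p : Ω → ℝ) (X : Ω → α) :
    H p X = -∑ ω, p ω * Real.logb 2 (distOf p X (X ω)) := by
  rw [H, sum_distOf_mul p X fun a => Real.logb 2 (distOf p X a)]

theorem H_comp_le [Fintype α] [Fintype β] (hp : ∀ ω, 0 ≤ p ω) (X : Ω → α) (f : α → β) :
    H p (fun ω => f (X ω)) ≤ H p X := by
  rw [H_eq_neg_sum, H_eq_neg_sum, neg_le_neg_iff]
  refine Finset.sum_le_sum fun ω _ => ?_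
  rcases (hp ω).eq_or_lt with hω | hω
  · simp [← hω]
  · have hX : 0 < distOf p X (X ω) := hω.trans_le (le_pr hp rfl)
    exact mul_le_mul_of_nonneg_left
      (Real.logb_le_logb_of_le one_lt_two hX (distOf_le_distOf_comp hp X f _)) hω.le

theorem H_le_crossEntropy [Fintype α] (hp : ∀ ω, 0 ≤ p ω) (X : Ω → α) {q : α → ℝ}
    (hq : ∀ a, 0 ≤ q a) (hq_sum : ∑ a, q a ≤ ∑ ω, p ω) (hq_supp : ∀ ω, q (X ω) = 0 → p ω = 0) :
    H p X ≤ -∑ ω, p ω * Real.logb 2 (q (X ω)) := by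
  have hsupp (a : α) (ha : q a = 0) : distOf p X a = 0 :=
    Finset.sum_eq_zero fun ω _ => ite_eq_right_iff.2 fun hω => hq_supp ω (hω ▸ ha)
  rw [← sum_distOf_mul p X fun a => Real.logb 2 (q a), H, neg_le_neg_iff]
  exact sum_mul_logb_le_sum_mul_logb one_lt_two _ (fun a _ => distOf_nonneg hp X a)
    (fun a _ => hq a) (fun a _ => hsupp a) (hq_sum.trans_eq (sum_distOf p X).symm)

variable [Fintype α] [Fintype β] [Fintype γ]

theorem condH_le_crossEntropy (hp : ∀ ω, 0 ≤ p ω) (X : Ω → α) (Z : Ω → β) {r : α → β → ℝ}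
    (hr : ∀ a z, 0 ≤ r a z) (hr_sum : ∀ z, ∑ a, r a z ≤ 1)
    (hr_supp : ∀ ω, r (X ω) (Z ω) = 0 → p ω = 0) :
    condH p X Z ≤ -∑ ω, p ω * Real.logb 2 (r (X ω) (Z ω)) := by
  have hZ (ω : Ω) (hω : distOf p Z (Z ω) = 0) : p ω = 0 := eq_zero_of_pr_eq_zero hp hω rfl
  have hmass : ∑ x : α × β, distOf p Z x.2 * r x.1 x.2 ≤ ∑ ω, p ω := by
    rw [Fintype.sum_prod_type_right, ← sum_distOf p Z]
    simp only [← Finset.mul_sum]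
    exact Finset.sum_le_sum fun z _ => mul_le_of_le_one_right (distOf_nonneg hp Z z) (hr_sum z)
  have hgibbs : H p (fun ω => (X ω, Z ω)) ≤
      -∑ ω, p ω * Real.logb 2 (distOf p Z (Z ω) * r (X ω) (Z ω)) :=
    H_le_crossEntropy hp (fun ω => (X ω, Z ω)) (q := fun x => distOf p Z x.2 * r x.1 x.2)
      (fun x => mul_nonneg (distOf_nonneg hp Z x.2) (hr x.1 x.2)) hmass
      fun ω hω => (mul_eq_zero.1 hω).elim (hZ ω) (hr_supp ω)
  have hsplit (ω : Ω) : p ω * Real.logb 2 (distOf p Z (Z ω) * r (X ω) (Z ω)) =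
      p ω * Real.logb 2 (distOf p Z (Z ω)) + p ω * Real.logb 2 (r (X ω) (Z ω)) := by
    by_cases hω : p ω = 0
    · simp [hω]
    · rw [Real.logb_mul (mt (hZ ω) hω) (mt (hr_supp ω) hω), mul_add]
  simp only [hsplit, Finset.sum_add_distrib] at hgibbs
  rw [condH, H_eq_neg_sum p Z]
  linarith

theorem condH_le_condH_add_condH (hp : ∀ ω, 0 ≤ p ω) (X : Ω → α) (Y : Ω → β) (Z : Ω → γ) :
    condH p X Z ≤ condH p Y Z + condH p X (fun ω => (Y ω, Z ω)) := by
  have hdrop : H p (fun ω => (X ω, Z ω)) ≤ H p (fun ω => (X ω, Y ω, Z ω)) :=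
    H_comp_le hp (fun ω => (X ω, Y ω, Z ω)) fun x => (x.1, x.2.2)
  simp only [condH]
  linarith

end Entropy

section Fano

variable [Fintype α] [Fintype β] [Nontrivial α]

theorem sum_ite_one_sub_div_card_sub_one (c : α) (e : ℝ) :
    ∑ a, (if c = a then 1 - e else e / (Fintype.card α - 1 : ℝ)) = 1 := by
  have hn : (Fintype.card α - 1 : ℝ) ≠ 0 :=
    (sub_pos.2 (Nat.one_lt_cast.2 Fintype.one_lt_card)).ne'
  have hrest : ∑ a ∈ {c}ᶜ, (if c = a then 1 - e else e / (Fintype.card α - 1 : ℝ)) =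
      (Fintype.card α - 1 : ℝ) * (e / (Fintype.card α - 1)) := by
    rw [Finset.sum_congr rfl fun a ha => if_neg (by simpa [eq_comm] using ha), Finset.sum_const,
      Finset.card_compl, Finset.card_singleton, nsmul_eq_mul, Nat.cast_pred Fintype.card_pos]
  rw [Fintype.sum_eq_add_sum_compl c, hrest, if_pos rfl, mul_div_cancel₀ _ hn, sub_add_cancel]

theorem condH_le_binEnt_add_mul_logb (hp : ∀ ω, 0 ≤ p ω) (hsum : ∑ ω, p ω = 1) (A : Ω → α)
    (Z : Ω → β) (g : β → α) :
    condH p A Z ≤ binEnt (pr p fun ω => g (Z ω) ≠ A ω) +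
      pr p (fun ω => g (Z ω) ≠ A ω) * Real.logb 2 (Fintype.card α - 1) := by
  set e := pr p fun ω => g (Z ω) ≠ A ω with he
  have hn : 0 < (Fintype.card α - 1 : ℝ) := sub_pos.2 (Nat.one_lt_cast.2 Fintype.one_lt_card)
  have hcorrect : pr p (fun ω => g (Z ω) = A ω) = 1 - e :=
    eq_sub_of_add_eq ((pr_add_pr_not p _).trans hsum)
  have he0 : 0 ≤ e := pr_nonneg hp _
  have he1 : 0 ≤ 1 - e := hcorrect ▸ pr_nonneg hp _
  have hsupp (ω : Ω) (hω : (if g (Z ω) = A ω then 1 - e else e / (Fintype.card α - 1)) = 0) :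
      p ω = 0 := by
    split_ifs at hω with hg
    · exact eq_zero_of_pr_eq_zero hp (hcorrect.trans hω) hg
    · exact eq_zero_of_pr_eq_zero hp ((div_eq_zero_iff.1 hω).resolve_right hn.ne') hg
  have hlog : e * Real.logb 2 (e / (Fintype.card α - 1)) =
      e * Real.logb 2 e - e * Real.logb 2 (Fintype.card α - 1) := by
    by_cases h0 : e = 0
    · simp [h0]
    · rw [Real.logb_div h0 hn.ne', mul_sub]
  calc condH p A Z
      ≤ -∑ ω, p ω * Real.logb 2 (if g (Z ω) = A ω then 1 - e else e / (Fintype.card α - 1)) :=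
        condH_le_crossEntropy hp A Z (r := fun a z => if g z = a then 1 - e else _)
          (fun _ _ => ite_nonneg he1 (div_nonneg he0 hn.le))
          (fun z => (sum_ite_one_sub_div_card_sub_one (g z) e).le) hsupp
    _ = -((1 - e) * Real.logb 2 (1 - e) + e * Real.logb 2 (e / (Fintype.card α - 1))) := by
        simp only [apply_ite (Real.logb 2), sum_mul_ite, hcorrect, ← he]
    _ = binEnt e + e * Real.logb 2 (Fintype.card α - 1) := by
        rw [hlog, binEnt]
        ring

theorem condH_le_one_add_mul_logb (hp : ∀ ω, 0 ≤ p ω) (hsum : ∑ ω, p ω = 1) (A : Ω → α)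
    (Z : Ω → β) (g : β → α) :
    condH p A Z ≤ 1 + pr p (fun ω => g (Z ω) ≠ A ω) * Real.logb 2 (Fintype.card α) := by
  refine (condH_le_binEnt_add_mul_logb hp hsum A Z g).trans (add_le_add (binEnt_le_one _) ?_)
  have hn : 0 < (Fintype.card α - 1 : ℝ) := sub_pos.2 (Nat.one_lt_cast.2 Fintype.one_lt_card)
  exact mul_le_mul_of_nonneg_left
    (Real.logb_le_logb_of_le one_lt_two hn (sub_le_self _ zero_le_one)) (pr_nonneg hp _)

end Fano

end InfoQA

theorem linear_accuracy_bound_general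
    {Ω 𝒜 𝒴 𝒲 : Type*} [Fintype Ω] [Fintype 𝒜] [Fintype 𝒴] [Fintype 𝒲]
    (p : Ω → ℝ) (hp : ∀ ω, 0 ≤ p ω) (hsum : ∑ ω, p ω = 1)
    (hcard : 2 ≤ Fintype.card 𝒜)
    (A : Ω → 𝒜) (Y : Ω → 𝒴) (W : Ω → 𝒲) (g : 𝒴 → 𝒲 → 𝒜) :
    1 - pr p (fun ω => g (Y ω) (W ω) ≠ A ω) ≤
      min 1 (1 - (condH p A W - condH p Y W - 1) / Real.logb 2 (Fintype.card 𝒜 : ℝ)) := by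
  have : Nontrivial 𝒜 := Fintype.one_lt_card_iff_nontrivial.1 hcard
  have hlog : 0 < Real.logb 2 (Fintype.card 𝒜 : ℝ) :=
    Real.logb_pos one_lt_two (Nat.one_lt_cast.2 hcard)
  have hchain := condH_le_condH_add_condH hp A Y W
  have hfano := condH_le_one_add_mul_logb hp hsum A (fun ω => (Y ω, W ω)) fun z => g z.1 z.2
  refine le_min (sub_le_self _ (pr_nonneg hp _)) (sub_le_sub_left ?_ 1)
  rw [div_le_iff₀ hlog]
  linarith

/-- Linear accuracy bound: with `Acc = 1 − P_e`, `β = H(A | W)`, `C = H(Y | W)`,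
`Acc ≤ min{1, 1 − (β − C − 1) / log₂ |𝒜|}`. -/
theorem linear_accuracy_bound
    {Ω 𝒜 𝒴 𝒲 : Type*} [Fintype Ω] [Fintype 𝒜] [Fintype 𝒴] [Fintype 𝒲]
    (p : Ω → ℝ) (hp : ∀ ω, 0 ≤ p ω) (hsum : ∑ ω, p ω = 1)
    (hcard : 2 ≤ Fintype.card 𝒜)
    (A : Ω → 𝒜) (Y : Ω → 𝒴) (W : Ω → 𝒲) (g : 𝒴 → 𝒜) :
    1 - pr p (fun ω => g (Y ω) ≠ A ω) ≤
      min 1 (1 - (condH p A W - condH p Y W - 1) / Real.logb 2 (Fintype.card 𝒜 : ℝ)) :=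
  linear_accuracy_bound_general p hp hsum hcard A Y W fun y _ => g y
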